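/- (Exponential convergence to the stationary profile.) Let j > 0 and K ≥ 1 an integer, and let ρ*(r) = j·(1−α^K)·r + 1/2 where α ∈ (1/2,1) is the unique solution of α + j·α^K = j + 1/2. There exist constants c, c′ > 0 such that for every bounded measurable initial datum ρ₀ : [−1,1] → [0,1] and every solution ρ of the macroscopic integral equation with initial datum ρ₀ (with continuous boundary traces t ↦ ρ(±1,t)), one has sup_{r∈[−1,1]} |ρ(r,t) − ρ*(r)| ≤ c′·e^{−c·t} for all t > 0. -/

import Mathlib

open MeasureTheory

/-- The Gaussian heat kernel on the real line. -/
noncomputable def G (t r r' : ℝ) : ℝ :=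
  Real.exp (-(r - r') ^ 2 / (2 * t)) / Real.sqrt (2 * Real.pi * t)

/-- The Neumann heat kernel on `[-1,1]`, obtained from the Gaussian kernel by
the reflection map: for `r' ∈ (-1,1)`,
`P t r r' = ∑_{n∈ℤ} [G t r (r'+4n) + G t r (2−r'+4n)]`, while at the boundary
`P t r (±1) = ∑_{n∈ℤ} 2·G t r (±1+4n)`. -/
noncomputable def P (t r r' : ℝ) : ℝ :=
  if r' = 1 ∨ r' = -1 then ∑' n : ℤ, 2 * G t r (r' + 4 * n)
  else ∑' n : ℤ, (G t r (r' + 4 * n) + G t r (2 - r' + 4 * n))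


/-- `ρ : [−1,1] × [0,∞) → [0,1]` (encoded as `ρ : ℝ → ℝ → ℝ`, first argument the
space variable) is a bounded measurable solution of the macroscopic integral
equation with initial datum `ρ₀ : [−1,1] → [0,1]`: it takes values in `[0,1]`,
agrees with `ρ₀` at time `0`, and for all `t > 0`, `r ∈ [−1,1]`,
`ρ(r,t) = ∫_{−1}^{1} P_t(r,r')ρ₀(r')dr'
  + (j/2)∫_0^t [P_s(r,1)(1 − ρ(1,t−s)^K) − P_s(r,−1)(1 − (1 − ρ(−1,t−s))^K)] ds`. -/
def IsMacroSolution (j : ℝ) (K : ℕ) (ρ₀ : ℝ → ℝ) (ρ : ℝ → ℝ → ℝ) : Prop :=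
  Measurable (Function.uncurry ρ) ∧
  (∀ r ∈ Set.Icc (-1 : ℝ) 1, ∀ t : ℝ, 0 ≤ t → ρ r t ∈ Set.Icc (0 : ℝ) 1) ∧
  (∀ r ∈ Set.Icc (-1 : ℝ) 1, ρ r 0 = ρ₀ r) ∧
  (∀ t : ℝ, 0 < t → ∀ r ∈ Set.Icc (-1 : ℝ) 1,
    ρ r t = (∫ r' in (-1 : ℝ)..1, P t r r' * ρ₀ r')
      + j / 2 * ∫ s in (0 : ℝ)..t,
          (P s r 1 * (1 - (ρ 1 (t - s)) ^ K)
            - P s r (-1) * (1 - (1 - ρ (-1) (t - s)) ^ K)))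

/-!
Poisson summation diagonalises `P` in the Neumann modes `cos (k π (r - 1) / 2)`, with rates
`π² k² / 8`, so the coefficients `cₖ` of `ρ - ρ*` satisfy linear ODEs forced only by the differences
of the boundary fluxes from their stationary values. In the derivative of `∑ₖ cₖ²` these differences
are paired with the boundary values of `ρ - ρ*`, and both pairings are dissipative because `u ↦ uᴷ`
is increasing on `[0, 1]`; at the right end, `α > 0` makes the dissipation quadratic. A Poincaré
inequality with one boundary trace then yields exponential decay of `∑ₖ cₖ²`, uniformly in the
initial datum, and interpolation with the a priori bound `cₖ = O(1 / (1 + k²))` turns it into decay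
in the supremum norm. The ODEs hold in the classical sense because the mode series converges locally
uniformly in `t > 0`, which makes the boundary traces continuous there.
-/

open Real Set Filter Topology

theorem sq_le_mul_of_hasSum {ι : Type*} {f g : ι → ℝ} {a A B : ℝ}
    (hfg : HasSum (fun i => f i * g i) a) (hf : HasSum (fun i => f i ^ 2) A)
    (hg : HasSum (fun i => g i ^ 2) B) : a ^ 2 ≤ A * B := by
  have quadratic_nonneg (x : ℝ) : 0 ≤ B * (x * x) + 2 * a * x + A := by
    have h := ((hg.mul_left (x * x)).add (hfg.mul_left (2 * x))).add hf
    have := h.nonneg fun i => by nlinarith only [sq_nonneg (x * g i + f i)]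
    linarith
  have := discrim_le_zero quadratic_nonneg
  rw [discrim] at this
  linarith

theorem le_rpow_mul_rpow_of_le {a b d p q : ℝ} (ha : 0 ≤ a) (hab : a ≤ b) (had : a ≤ d)
    (hp : 0 ≤ p) (hq : 0 ≤ q) (hpq : p + q = 1) : a ≤ b ^ p * d ^ q :=
  calc a = a ^ p * a ^ q := by rw [← rpow_add_of_nonneg ha hp hq, hpq, rpow_one]
    _ ≤ b ^ p * d ^ q := by
        have := rpow_nonneg (ha.trans hab) p
        gcongr

theorem pow_pred_mul_sq_le {K : ℕ} (hK : K ≠ 0) {u a : ℝ} (hu : 0 ≤ u) (ha : 0 ≤ a) :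
    a ^ (K - 1) * (u - a) ^ 2 ≤ (u ^ K - a ^ K) * (u - a) := by
  have single_term_le : a ^ (K - 1) ≤ ∑ i ∈ Finset.range K, u ^ i * a ^ (K - 1 - i) := by
    simpa using Finset.single_le_sum (f := fun i => u ^ i * a ^ (K - 1 - i))
      (fun i _ => by positivity) (Finset.mem_range.mpr (Nat.pos_of_ne_zero hK))
  calc a ^ (K - 1) * (u - a) ^ 2
      ≤ (∑ i ∈ Finset.range K, u ^ i * a ^ (K - 1 - i)) * (u - a) ^ 2 := by gcongr
    _ = (u ^ K - a ^ K) * (u - a) := by rw [← geom_sum₂_mul]; ring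

theorem le_mul_exp_of_hasDerivAt_le {f f' : ℝ → ℝ} {κ a b : ℝ} (hab : a ≤ b)
    (hf : ∀ t ∈ Icc a b, HasDerivAt f (f' t) t) (hle : ∀ t ∈ Icc a b, f' t ≤ κ * f t) :
    f b ≤ f a * exp (κ * (b - a)) := by
  rw [← gronwallBound_ε0]
  refine le_gronwallBound_of_liminf_deriv_right_le (f' := f')
    (fun t ht => (hf t ht).continuousAt.continuousWithinAt) (fun t ht r hr => ?_) le_rfl
    (fun t ht => by simpa using hle t (Ico_subset_Icc_self ht)) b (right_mem_Icc.mpr hab)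
  simpa only [slope_def_field, div_eq_inv_mul] using
    (hf t (Ico_subset_Icc_self ht)).hasDerivWithinAt.liminf_right_slope_le hr

/-! ### Neumann eigenvalues and eigenfunctions -/

/-- The quadratic weight `(1 + k²)⁻¹` against which all cosine coefficients are measured. -/
noncomputable def decayWeight (k : ℤ) : ℝ := (1 + (k : ℝ) ^ 2)⁻¹

theorem decayWeight_pos (k : ℤ) : 0 < decayWeight k := by
  rw [decayWeight]; positivity

theorem decayWeight_le_one (k : ℤ) : decayWeight k ≤ 1 :=
  inv_le_one_of_one_le₀ (le_add_of_nonneg_right (sq_nonneg _))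

theorem decayWeight_zero : decayWeight 0 = 1 := by simp [decayWeight]

theorem one_le_sq_of_ne_zero {k : ℤ} (hk : k ≠ 0) : (1 : ℝ) ≤ (k : ℝ) ^ 2 :=
  one_le_sq_iff_one_le_abs _ |>.mpr (mod_cast Int.one_le_abs hk)

theorem summable_decayWeight_rpow {p : ℝ} (hp : 1 / 2 < p) :
    Summable fun k : ℤ => decayWeight k ^ p := by
  refine Summable.of_norm_bounded_eventually
    (summable_abs_int_rpow (show 1 < 2 * p by linarith)) ?_
  filter_upwards [eventually_cofinite_ne 0] with k hk
  have hk' : (0 : ℝ) < |(k : ℝ)| := by positivity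
  rw [norm_of_nonneg (rpow_nonneg (decayWeight_pos k).le _), ← mul_neg, rpow_mul hk'.le,
    rpow_two, rpow_neg (sq_nonneg _), ← inv_rpow (sq_nonneg _), sq_abs]
  exact rpow_le_rpow (decayWeight_pos k).le
    (inv_anti₀ (by positivity) (le_add_of_nonneg_left zero_le_one)) (by linarith)

theorem summable_decayWeight : Summable decayWeight := by
  simpa using summable_decayWeight_rpow (p := 1) (by norm_num)

theorem abs_le_mul_decayWeight_of_ne_zero {c : ℤ → ℝ} {a B : ℝ} (hc : HasSum c a)
    (hB : 0 ≤ B) (hle : ∀ k ≠ 0, |c k| ≤ B * decayWeight k) (k : ℤ) :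
    |c k| ≤ (|a| + B * (1 + ∑' l, decayWeight l)) * decayWeight k := by
  have weight_sum_nonneg : 0 ≤ ∑' l, decayWeight l := tsum_nonneg fun l => (decayWeight_pos l).le
  rcases eq_or_ne k 0 with rfl | hk
  · have tail_le : |a - c 0| ≤ B * ∑' l, decayWeight l := by
      rw [← (hasSum_ite_sub_hasSum hc 0).tsum_eq, ← tsum_mul_left, ← norm_eq_abs]
      refine tsum_of_norm_bounded (summable_decayWeight.mul_left B).hasSum fun l => ?_
      split_ifs with hl
      · simpa using mul_nonneg hB (decayWeight_pos l).le
      · exact hle l hl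
    rw [decayWeight_zero]
    have := abs_sub_abs_le_abs_sub (c 0) a
    rw [abs_sub_comm] at this
    linarith
  · refine (hle k hk).trans (mul_le_mul_of_nonneg_right ?_ (decayWeight_pos k).le)
    nlinarith [abs_nonneg a, mul_nonneg hB weight_sum_nonneg]

/-- The `k`-th eigenvalue `π² k² / 8` of `-½ ∂²` on `[-1, 1]` with Neumann boundary conditions.
Letting `k` range over `ℤ` counts every nonconstant mode twice, as Poisson summation does. -/
noncomputable def neumannEigenvalue (k : ℤ) : ℝ := π ^ 2 * (k : ℝ) ^ 2 / 8

/-- The Neumann eigenfunction for `neumannEigenvalue k`, normalised to be `1` at the right end. -/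
noncomputable def neumannMode (k : ℤ) (r : ℝ) : ℝ := cos (k * π * (r - 1) / 2)

theorem neumannEigenvalue_zero : neumannEigenvalue 0 = 0 := by simp [neumannEigenvalue]

theorem sq_le_neumannEigenvalue (k : ℤ) : (k : ℝ) ^ 2 ≤ neumannEigenvalue k := by
  rw [neumannEigenvalue, mul_div_right_comm]
  exact le_mul_of_one_le_left (sq_nonneg _) (by nlinarith [pi_gt_three])

theorem neumannEigenvalue_nonneg (k : ℤ) : 0 ≤ neumannEigenvalue k :=
  (sq_nonneg _).trans (sq_le_neumannEigenvalue k)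

theorem one_le_neumannEigenvalue {k : ℤ} (hk : k ≠ 0) : 1 ≤ neumannEigenvalue k :=
  (one_le_sq_of_ne_zero hk).trans (sq_le_neumannEigenvalue k)

theorem neumannEigenvalue_mul_decayWeight_le (k : ℤ) :
    neumannEigenvalue k * decayWeight k ≤ 2 := by
  rw [decayWeight, ← div_eq_mul_inv, div_le_iff₀ (by positivity), neumannEigenvalue]
  have pi_sq_le : π ^ 2 ≤ 16 := by nlinarith [pi_pos, pi_le_four]
  nlinarith [sq_nonneg (k : ℝ)]

theorem inv_neumannEigenvalue_le {k : ℤ} (hk : k ≠ 0) :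
    (neumannEigenvalue k)⁻¹ ≤ 2 * decayWeight k := by
  have h := one_le_sq_of_ne_zero hk
  rw [decayWeight, ← div_eq_mul_inv,
    inv_le_comm₀ (one_pos.trans_le (one_le_neumannEigenvalue hk)) (by positivity), inv_div]
  linarith [sq_le_neumannEigenvalue k]

theorem exp_neg_neumannEigenvalue_mul_le (k : ℤ) {s t : ℝ} (hs : 0 < s) (hst : s ≤ t) :
    exp (-(neumannEigenvalue k * t)) ≤ (1 + s⁻¹) * decayWeight k := by
  have exponent_le : (k : ℝ) ^ 2 * s ≤ neumannEigenvalue k * t :=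
    mul_le_mul (sq_le_neumannEigenvalue k) hst hs.le (neumannEigenvalue_nonneg k)
  rw [exp_neg, decayWeight, ← div_eq_mul_inv, inv_le_comm₀ (exp_pos _) (by positivity), inv_div]
  calc (1 + (k : ℝ) ^ 2) / (1 + s⁻¹) ≤ 1 + (k : ℝ) ^ 2 * s := by
        rw [div_le_iff₀ (by positivity)]
        have : (1 + (k : ℝ) ^ 2 * s) * (1 + s⁻¹) = 1 + k ^ 2 + s⁻¹ + k ^ 2 * s := by
          field_simp
          ring
        rw [this]
        have : 0 ≤ s⁻¹ + (k : ℝ) ^ 2 * s := by positivity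
        linarith
    _ ≤ exp (neumannEigenvalue k * t) := by
        linarith [add_one_le_exp (neumannEigenvalue k * t)]

theorem summable_exp_neg_neumannEigenvalue_mul {t : ℝ} (ht : 0 < t) :
    Summable fun k => exp (-(neumannEigenvalue k * t)) :=
  .of_nonneg_of_le (fun _ => (exp_pos _).le)
    (fun k => exp_neg_neumannEigenvalue_mul_le k ht le_rfl) (summable_decayWeight.mul_left _)

theorem continuous_neumannMode (k : ℤ) : Continuous (neumannMode k) := by
  unfold neumannMode
  fun_prop

theorem abs_neumannMode_le_one (k : ℤ) (r : ℝ) : |neumannMode k r| ≤ 1 := abs_cos_le_one _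

theorem abs_half_mul_neumannMode_le_one (k : ℤ) (r : ℝ) : |1 / 2 * neumannMode k r| ≤ 1 := by
  rw [abs_mul, abs_of_pos one_half_pos]
  linarith [abs_neumannMode_le_one k r]

theorem neumannMode_zero (r : ℝ) : neumannMode 0 r = 1 := by simp [neumannMode]

theorem neumannMode_one (k : ℤ) : neumannMode k 1 = 1 := by simp [neumannMode]

theorem two_mul_neumannMode_mul_neumannMode (k : ℤ) (r r' : ℝ) :
    2 * (neumannMode k r * neumannMode k r') =
      cos (k * π * (r - r') / 2) + cos (k * π * (r - (2 - r')) / 2) := by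
  rw [neumannMode, neumannMode, ← mul_assoc, two_mul_cos_mul_cos]
  ring_nf

theorem neumannMode_mul_neumannMode_neg_one (k : ℤ) (r : ℝ) :
    neumannMode k r * neumannMode k (-1) = cos (k * π * (r + 1) / 2) := by
  have shift : k * π * (r - (2 - -1)) / 2 = k * π * (r + 1) / 2 - k * (2 * π) := by ring
  have h := two_mul_neumannMode_mul_neumannMode k r (-1)
  rw [shift, cos_sub_int_mul_two_pi, sub_neg_eq_add] at h
  linarith

/-! ### Poisson summation -/

theorem exp_eq_sqrt_mul_G {t : ℝ} (ht : 0 < t) (r y : ℝ) :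
    exp (-(r - y) ^ 2 / (2 * t)) = √(2 * π * t) * G t r y := by
  rw [G, mul_div_cancel₀]
  positivity

theorem summable_G_translates {t : ℝ} (ht : 0 < t) (r y : ℝ) :
    Summable fun n : ℤ => G t r (y + 4 * n) := by
  have hτ : 0 < 32 / (π ^ 2 * t) := by positivity
  refine .of_nonneg_of_le (fun n => ?_) (fun n => ?_)
    ((summable_exp_neg_neumannEigenvalue_mul hτ).mul_left
      (exp ((r - y) ^ 2 / (2 * t)) / √(2 * π * t)))
  · rw [G]
    positivity
  · have exponent_eq : neumannEigenvalue n * (32 / (π ^ 2 * t)) = 8 * (n : ℝ) ^ 2 / (2 * t) := by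
      rw [neumannEigenvalue]
      field_simp
      ring
    rw [G, div_mul_eq_mul_div, ← exp_add, exponent_eq, ← sub_eq_add_neg, ← sub_div]
    gcongr
    nlinarith [sq_nonneg (r - y - 2 * n)]

theorem poissonSource_eq (t z : ℝ) (k : ℤ) :
    Complex.exp (-π * ((π * t / 8 : ℝ) : ℂ) * k ^ 2 +
        2 * π * (Complex.I * (z / 4 : ℝ)) * k) =
      (exp (-(neumannEigenvalue k * t)) : ℂ) * Complex.exp ((k * π * z / 2 : ℝ) * Complex.I) := by
  rw [Complex.ofReal_exp, ← Complex.exp_add, neumannEigenvalue]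
  push_cast
  ring_nf

theorem poissonTarget_eq {t : ℝ} (ht : 0 < t) (r y : ℝ) (n : ℤ) :
    Complex.exp (-π / ((π * t / 8 : ℝ) : ℂ) *
        (n + Complex.I * (Complex.I * ((r - y) / 4 : ℝ))) ^ 2) =
      ((√(2 * π * t) * G t r (y + 4 * n) : ℝ) : ℂ) := by
  rw [← exp_eq_sqrt_mul_G ht, Complex.ofReal_exp, ← mul_assoc, Complex.I_mul_I]
  congr 1
  push_cast
  have : (t : ℂ) ≠ 0 := by exact_mod_cast ht.ne'
  have : (π : ℂ) ≠ 0 := by exact_mod_cast pi_ne_zero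
  field_simp
  ring

theorem tsum_exp_mul_exp_I_eq_tsum_G {t : ℝ} (ht : 0 < t) (r y : ℝ) :
    ∑' k : ℤ, (exp (-(neumannEigenvalue k * t)) : ℂ) *
        Complex.exp ((k * π * (r - y) / 2 : ℝ) * Complex.I) =
      ((4 * ∑' n : ℤ, G t r (y + 4 * n) : ℝ) : ℂ) := by
  have hre : 0 < ((π * t / 8 : ℝ) : ℂ).re := by
    rw [Complex.ofReal_re]
    positivity
  have root_eq : (1 : ℂ) / ((π * t / 8 : ℝ) : ℂ) ^ (1 / 2 : ℂ) = ((1 / √(π * t / 8) : ℝ) : ℂ) := by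
    rw [sqrt_eq_rpow, Complex.ofReal_div _ ((π * t / 8) ^ (1 / 2 : ℝ)),
      Complex.ofReal_cpow (by positivity)]
    norm_num
  have sqrt_ratio : √(2 * π * t) = 4 * √(π * t / 8) := by
    rw [show 2 * π * t = 4 ^ 2 * (π * t / 8) by ring, sqrt_mul (by norm_num),
      sqrt_sq (by norm_num)]
  have poisson := Complex.tsum_exp_neg_quadratic hre (Complex.I * ((r - y) / 4 : ℝ))
  rw [tsum_congr (poissonSource_eq t (r - y)), tsum_congr (poissonTarget_eq ht r y), root_eq,
    ← Complex.ofReal_tsum, ← Complex.ofReal_mul, tsum_mul_left, sqrt_ratio] at poisson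
  rw [poisson]
  have : 0 < √(π * t / 8) := by positivity
  congr 1
  field_simp

theorem hasSum_G_translates {t : ℝ} (ht : 0 < t) (r y : ℝ) :
    HasSum (fun k : ℤ => 1 / 4 * (exp (-(neumannEigenvalue k * t)) * cos (k * π * (r - y) / 2)))
      (∑' n : ℤ, G t r (y + 4 * n)) := by
  have summable_source : Summable fun k : ℤ => (exp (-(neumannEigenvalue k * t)) : ℂ) *
      Complex.exp ((k * π * (r - y) / 2 : ℝ) * Complex.I) := by
    refine .of_norm ((summable_exp_neg_neumannEigenvalue_mul ht).congr fun k => ?_)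
    rw [norm_mul, Complex.norm_exp_ofReal_mul_I, mul_one, Complex.norm_real,
      norm_of_nonneg (exp_pos _).le]
  have h := summable_source.hasSum
  rw [tsum_exp_mul_exp_I_eq_tsum_G ht] at h
  have h_re := (Complex.hasSum_re h).mul_left (1 / 4)
  rw [Complex.ofReal_re, ← mul_assoc, one_div_mul_cancel four_ne_zero, one_mul] at h_re
  exact h_re.congr_fun fun k => by rw [Complex.re_ofReal_mul, Complex.exp_ofReal_mul_I_re]

theorem hasSum_P {t : ℝ} (ht : 0 < t) (r r' : ℝ) :
    HasSum (fun k => 1 / 2 *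
      (exp (-(neumannEigenvalue k * t)) * (neumannMode k r * neumannMode k r'))) (P t r r') := by
  unfold P
  split_ifs with h
  · rw [tsum_mul_left]
    refine ((hasSum_G_translates ht r r').mul_left 2).congr_fun fun k => ?_
    have product_eq : neumannMode k r * neumannMode k r' = cos (k * π * (r - r') / 2) := by
      rcases h with rfl | rfl
      · rw [neumannMode_one, mul_one, neumannMode]
      · rw [neumannMode_mul_neumannMode_neg_one, sub_neg_eq_add]
    rw [product_eq]
    ring
  · rw [(summable_G_translates ht r r').tsum_add (summable_G_translates ht r (2 - r'))]
    refine ((hasSum_G_translates ht r r').add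
      (hasSum_G_translates ht r (2 - r'))).congr_fun fun k => ?_
    linear_combination
      1 / 4 * exp (-(neumannEigenvalue k * t)) * two_mul_neumannMode_mul_neumannMode k r r'

theorem hasSum_inv_sq_mul_cos {z : ℝ} (hz : z ∈ Icc (0 : ℝ) 1) :
    HasSum (fun k : ℤ => ((k : ℝ) ^ 2)⁻¹ * cos (2 * π * k * z))
      (2 * π ^ 2 * (z ^ 2 - z + 6⁻¹)) := by
  have bernoulli_expansion : HasSum (fun n : ℕ => ((n : ℝ) ^ 2)⁻¹ * cos (2 * π * n * z))
      (π ^ 2 * (z ^ 2 - z + 6⁻¹)) := by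
    have h := hasSum_one_div_nat_pow_mul_cos one_ne_zero hz
    rw [show 2 * 1 = 2 from rfl, ← bernoulliFun, bernoulliFun_two] at h
    simp only [one_div] at h
    have value_eq : (-1 : ℝ) ^ (1 + 1) * (2 * π) ^ 2 / 2 / (Nat.factorial 2 : ℝ) *
        (z ^ 2 - z + 6⁻¹) = π ^ 2 * (z ^ 2 - z + 6⁻¹) := by
      rw [Nat.factorial_two]
      push_cast
      ring
    rwa [value_eq] at h
  have h := HasSum.of_nat_of_neg (f := fun k : ℤ => ((k : ℝ) ^ 2)⁻¹ * cos (2 * π * k * z))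
    (by simpa using bernoulli_expansion) (by simpa using bernoulli_expansion)
  have value_eq : π ^ 2 * (z ^ 2 - z + 6⁻¹) + π ^ 2 * (z ^ 2 - z + 6⁻¹) -
      (((0 : ℤ) : ℝ) ^ 2)⁻¹ * cos (2 * π * (0 : ℤ) * z) = 2 * π ^ 2 * (z ^ 2 - z + 6⁻¹) := by
    rw [Int.cast_zero, zero_pow two_ne_zero, inv_zero]
    ring
  rwa [value_eq] at h

theorem hasSum_inv_neumannEigenvalue : HasSum (fun k => (neumannEigenvalue k)⁻¹) (8 / 3) := by
  have h := (hasSum_inv_sq_mul_cos (left_mem_Icc.mpr zero_le_one)).mul_left (8 / π ^ 2)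
  have value_eq : 8 / π ^ 2 * (2 * π ^ 2 * ((0 : ℝ) ^ 2 - 0 + 6⁻¹)) = 8 / 3 := by
    field_simp
    norm_num
  rw [value_eq] at h
  refine h.congr_fun fun k => ?_
  rw [neumannEigenvalue, mul_zero, cos_zero, mul_one, inv_div, div_mul_eq_div_div, div_eq_mul_inv]

/-! ### Affine profiles -/

/-- The cosine coefficients of the affine profile `r ↦ β r + 1/2`; at `k = 0` the quotient is
`0 / 0 = 0`, as it should be. -/
noncomputable def profileMode (β : ℝ) (k : ℤ) : ℝ :=
  (if k = 0 then 1 else 0) + β * (1 - neumannMode k (-1)) / (2 * neumannEigenvalue k)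

theorem hasSum_profileMode (β : ℝ) {r : ℝ} (hr : r ∈ Icc (-1 : ℝ) 1) :
    HasSum (fun k => 1 / 2 * neumannMode k r * profileMode β k) (β * r + 1 / 2) := by
  have h_right := hasSum_inv_sq_mul_cos (z := (1 - r) / 4)
    ⟨by linarith [hr.2], by linarith [hr.1]⟩
  have h_left := hasSum_inv_sq_mul_cos (z := (1 + r) / 4)
    ⟨by linarith [hr.1], by linarith [hr.2]⟩
  have h := ((h_right.sub h_left).mul_left (2 * β / π ^ 2)).add (hasSum_ite_eq (0 : ℤ) (1 / 2 : ℝ))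
  have value_eq : 2 * β / π ^ 2 * (2 * π ^ 2 * (((1 - r) / 4) ^ 2 - (1 - r) / 4 + 6⁻¹) -
      2 * π ^ 2 * (((1 + r) / 4) ^ 2 - (1 + r) / 4 + 6⁻¹)) + 1 / 2 = β * r + 1 / 2 := by
    field_simp
    ring
  rw [value_eq] at h
  refine h.congr_fun fun k => ?_
  have mode_eq : cos (2 * π * k * ((1 - r) / 4)) = neumannMode k r := by
    rw [neumannMode, ← cos_neg]
    ring_nf
  have mode_mul_eq : cos (2 * π * k * ((1 + r) / 4)) =
      neumannMode k r * neumannMode k (-1) := by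
    rw [neumannMode_mul_neumannMode_neg_one]
    ring_nf
  rw [mode_eq, mode_mul_eq, profileMode]
  rcases eq_or_ne k 0 with rfl | hk
  · simp [neumannMode_zero]
  · have : (k : ℝ) ≠ 0 := by exact_mod_cast hk
    simp only [hk, if_false, neumannEigenvalue]
    field_simp
    ring

theorem neumannEigenvalue_mul_profileMode (β : ℝ) (k : ℤ) :
    neumannEigenvalue k * profileMode β k = β / 2 * (1 - neumannMode k (-1)) := by
  rcases eq_or_ne k 0 with rfl | hk
  · simp [neumannEigenvalue_zero, neumannMode_zero]
  · have : neumannEigenvalue k ≠ 0 := (one_pos.trans_le (one_le_neumannEigenvalue hk)).ne'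
    rw [profileMode, if_neg hk]
    field_simp
    ring

theorem abs_profileMode_le (β : ℝ) {k : ℤ} (hk : k ≠ 0) :
    |profileMode β k| ≤ 2 * |β| * decayWeight k := by
  have hpos : 0 < neumannEigenvalue k := one_pos.trans_le (one_le_neumannEigenvalue hk)
  have numerator_le : |1 - neumannMode k (-1)| ≤ 2 := by
    have := abs_le.mp (abs_neumannMode_le_one k (-1))
    exact abs_le.mpr ⟨by linarith, by linarith⟩
  rw [profileMode, if_neg hk, zero_add, abs_div, abs_mul,
    abs_of_pos (by positivity : 0 < 2 * neumannEigenvalue k)]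
  calc |β| * |1 - neumannMode k (-1)| / (2 * neumannEigenvalue k)
      ≤ |β| * 2 / (2 * neumannEigenvalue k) := by gcongr
    _ = |β| * (neumannEigenvalue k)⁻¹ := by field_simp
    _ ≤ |β| * (2 * decayWeight k) := by gcongr; exact inv_neumannEigenvalue_le hk
    _ = 2 * |β| * decayWeight k := by ring

/-! ### Dissipation of energy -/

theorem trace_sub_zero_mode_sq_le {c : ℤ → ℝ} {a : ℝ} (hc : HasSum c a)
    (hc_energy : Summable fun k => neumannEigenvalue k * c k ^ 2) :
    (a - c 0) ^ 2 ≤ (∑' k, neumannEigenvalue k * c k ^ 2) * (8 / 3) := by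
  refine sq_le_mul_of_hasSum (f := fun k => √(neumannEigenvalue k) * c k)
    (g := fun k => (√(neumannEigenvalue k))⁻¹)
    ((hasSum_ite_sub_hasSum hc 0).congr_fun fun k => ?_)
    (hc_energy.hasSum.congr_fun fun k => ?_)
    (hasSum_inv_neumannEigenvalue.congr_fun fun k => ?_)
  · split_ifs with hk
    · simp [hk, neumannEigenvalue_zero]
    · have := sqrt_pos.mpr (one_pos.trans_le (one_le_neumannEigenvalue hk))
      field_simp
  · rw [mul_pow, sq_sqrt (neumannEigenvalue_nonneg k)]
  · rw [inv_pow, sq_sqrt (neumannEigenvalue_nonneg k)]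

theorem tsum_sq_sub_zero_mode_sq_le {c : ℤ → ℝ} (hc_sq : Summable fun k => c k ^ 2)
    (hc_energy : Summable fun k => neumannEigenvalue k * c k ^ 2) :
    ∑' k, c k ^ 2 - c 0 ^ 2 ≤ ∑' k, neumannEigenvalue k * c k ^ 2 := by
  refine hasSum_le (fun k => ?_) (hasSum_ite_sub_hasSum hc_sq.hasSum 0) hc_energy.hasSum
  split_ifs with hk
  · exact mul_nonneg (neumannEigenvalue_nonneg k) (sq_nonneg _)
  · exact le_mul_of_one_le_left (sq_nonneg _) (one_le_neumannEigenvalue hk)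

theorem tsum_sq_le_trace_sq_add {c : ℤ → ℝ} {x : ℝ} (hc : HasSum c (2 * x))
    (hc_sq : Summable fun k => c k ^ 2)
    (hc_energy : Summable fun k => neumannEigenvalue k * c k ^ 2) :
    ∑' k, c k ^ 2 ≤ 8 * x ^ 2 + 7 * ∑' k, neumannEigenvalue k * c k ^ 2 := by
  have energy_nonneg : 0 ≤ ∑' k, neumannEigenvalue k * c k ^ 2 :=
    tsum_nonneg fun k => mul_nonneg (neumannEigenvalue_nonneg k) (sq_nonneg _)
  nlinarith [sq_nonneg (4 * x - c 0), energy_nonneg, trace_sub_zero_mode_sq_le hc hc_energy,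
    tsum_sq_sub_zero_mode_sq_le hc_sq hc_energy]

/-- The cosine coefficients `c` of a solution of `∂ₜu = ½ ∂²u` on `[-1, 1]`, for times `t > T`, with
half boundary values `x t`, `y t` at `1`, `-1` (as `∑ₖ cₖ = 2 u(1)`), where heat leaves at rates
`g t`, `h t`. The fluxes are dissipative, strictly so at the right end, with constant `lam`. -/
structure DampedNeumannModes (T B M lam : ℝ) (c : ℤ → ℝ → ℝ) (x y g h : ℝ → ℝ) : Prop where
  hasSum_right : ∀ t, T < t → HasSum (fun k => c k t) (2 * x t)
  hasSum_left : ∀ t, T < t → HasSum (fun k => neumannMode k (-1) * c k t) (2 * y t)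
  hasDerivAt : ∀ k t, T < t →
    HasDerivAt (c k) (-(neumannEigenvalue k * c k t) - g t - neumannMode k (-1) * h t) t
  abs_coeff_le : ∀ k t, T < t → |c k t| ≤ B * decayWeight k
  abs_right_le : ∀ t, T < t → |g t| ≤ M
  abs_left_le : ∀ t, T < t → |h t| ≤ M
  damping_right : ∀ t, T < t → lam * x t ^ 2 ≤ g t * x t
  damping_left : ∀ t, T < t → 0 ≤ h t * y t

/-- The rate at which the `ℓ²` norm of damped Neumann modes decays when the right boundary flux
dissipates with constant `lam`. -/
noncomputable def dampingRate (lam : ℝ) : ℝ := min (lam / 4) (1 / 7)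

theorem dampingRate_pos {lam : ℝ} (hlam : 0 < lam) : 0 < dampingRate lam :=
  lt_min (by positivity) (by norm_num)

/-- The prefactor of the uniform exponential decay of damped Neumann modes whose coefficients are
at most `B` times `decayWeight`. -/
noncomputable def dampingConst (B : ℝ) : ℝ :=
  (B * √(∑' k, decayWeight k)) ^ (1 / 4 : ℝ) * B ^ (3 / 4 : ℝ) *
    ∑' k, decayWeight k ^ (3 / 4 : ℝ)

theorem dampingConst_nonneg {B : ℝ} (hB : 0 ≤ B) : 0 ≤ dampingConst B := by
  have : 0 ≤ ∑' k, decayWeight k ^ (3 / 4 : ℝ) :=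
    tsum_nonneg fun k => rpow_nonneg (decayWeight_pos k).le _
  rw [dampingConst]
  positivity

namespace DampedNeumannModes

variable {T B M lam s t : ℝ} {c : ℤ → ℝ → ℝ} {x y g h : ℝ → ℝ}

theorem bound_nonneg (H : DampedNeumannModes T B M lam c x y g h) : 0 ≤ B := by
  simpa [decayWeight_zero] using (abs_nonneg _).trans (H.abs_coeff_le 0 (T + 1) (lt_add_one T))

theorem sq_coeff_le (H : DampedNeumannModes T B M lam c x y g h) (ht : T < t) (k : ℤ) :
    c k t ^ 2 ≤ B ^ 2 * decayWeight k :=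
  calc c k t ^ 2 ≤ (B * decayWeight k) ^ 2 := sq_le_sq' (abs_le.mp (H.abs_coeff_le k t ht)).1
        (abs_le.mp (H.abs_coeff_le k t ht)).2
    _ ≤ B ^ 2 * decayWeight k := by
        rw [mul_pow]
        gcongr
        exact pow_le_of_le_one (decayWeight_pos k).le (decayWeight_le_one k) two_ne_zero

theorem summable_sq (H : DampedNeumannModes T B M lam c x y g h) (ht : T < t) :
    Summable fun k => c k t ^ 2 :=
  .of_nonneg_of_le (fun _ => sq_nonneg _) (H.sq_coeff_le ht) (summable_decayWeight.mul_left _)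

theorem eigenvalue_mul_abs_le (H : DampedNeumannModes T B M lam c x y g h) (ht : T < t) (k : ℤ) :
    neumannEigenvalue k * |c k t| ≤ 2 * B :=
  calc neumannEigenvalue k * |c k t|
      ≤ neumannEigenvalue k * (B * decayWeight k) :=
        mul_le_mul_of_nonneg_left (H.abs_coeff_le k t ht) (neumannEigenvalue_nonneg k)
    _ = neumannEigenvalue k * decayWeight k * B := by ring
    _ ≤ 2 * B := mul_le_mul_of_nonneg_right (neumannEigenvalue_mul_decayWeight_le k)
        H.bound_nonneg

theorem summable_eigenvalue_mul_sq (H : DampedNeumannModes T B M lam c x y g h) (ht : T < t) :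
    Summable fun k => neumannEigenvalue k * c k t ^ 2 := by
  refine .of_nonneg_of_le (fun k => mul_nonneg (neumannEigenvalue_nonneg k) (sq_nonneg _))
    (fun k => ?_) (summable_decayWeight.mul_left (2 * B * B))
  have hB := H.bound_nonneg
  rw [← sq_abs, sq, ← mul_assoc, mul_assoc (2 * B)]
  exact mul_le_mul (H.eigenvalue_mul_abs_le ht k) (H.abs_coeff_le k t ht) (abs_nonneg _)
    (by positivity)

theorem abs_deriv_le (H : DampedNeumannModes T B M lam c x y g h) (ht : T < t) (k : ℤ) :
    |-(neumannEigenvalue k * c k t) - g t - neumannMode k (-1) * h t| ≤ 2 * B + M + M := by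
  refine (abs_sub _ _).trans (add_le_add ((abs_sub _ _).trans (add_le_add ?_ ?_)) ?_)
  · rw [abs_neg, abs_mul, abs_of_nonneg (neumannEigenvalue_nonneg k)]
    exact H.eigenvalue_mul_abs_le ht k
  · exact H.abs_right_le t ht
  · rw [abs_mul]
    exact (mul_le_of_le_one_left (abs_nonneg _) (abs_neumannMode_le_one k _)).trans
      (H.abs_left_le t ht)

theorem hasDerivAt_tsum_sq (H : DampedNeumannModes T B M lam c x y g h) (ht : T < t) :
    HasDerivAt (fun t => ∑' k, c k t ^ 2)
      (-2 * ∑' k, neumannEigenvalue k * c k t ^ 2 - 4 * (g t * x t) - 4 * (h t * y t)) t := by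
  have deriv_sum := ((((H.summable_eigenvalue_mul_sq ht).hasSum.mul_left (-2)).sub
    ((H.hasSum_right t ht).mul_left (2 * g t))).sub ((H.hasSum_left t ht).mul_left (2 * h t)))
  have deriv_sum' : HasSum (fun k => 2 * c k t *
      (-(neumannEigenvalue k * c k t) - g t - neumannMode k (-1) * h t)) _ :=
    deriv_sum.congr_fun fun k => by ring
  have key := hasDerivAt_tsum_of_isPreconnected (g := fun k t => c k t ^ 2)
    (g' := fun k t => 2 * c k t *
      (-(neumannEigenvalue k * c k t) - g t - neumannMode k (-1) * h t))
    ((summable_decayWeight.mul_left B).mul_right (2 * (2 * B + M + M))) isOpen_Ioi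
    isPreconnected_Ioi (fun k s hs => ?_) (fun k s hs => ?_) ht (H.summable_sq ht) ht
  · rw [deriv_sum'.tsum_eq] at key
    exact key.congr_deriv (by ring)
  · have sq_deriv := (H.hasDerivAt k s hs).pow 2
    rwa [Nat.cast_ofNat, Nat.add_one_sub_one, pow_one] at sq_deriv
  · rw [norm_eq_abs, mul_comm 2, mul_assoc, abs_mul, abs_mul, abs_two]
    have := mul_nonneg H.bound_nonneg (decayWeight_pos k).le
    gcongr
    · exact H.abs_coeff_le k s hs
    · exact H.abs_deriv_le hs k

theorem energy_deriv_le (H : DampedNeumannModes T B M lam c x y g h) (hlam : 0 < lam)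
    (ht : T < t) :
    -2 * ∑' k, neumannEigenvalue k * c k t ^ 2 - 4 * (g t * x t) - 4 * (h t * y t) ≤
      -(2 * dampingRate lam) * ∑' k, c k t ^ 2 := by
  have poincare := tsum_sq_le_trace_sq_add (H.hasSum_right t ht) (H.summable_sq ht)
    (H.summable_eigenvalue_mul_sq ht)
  have energy_nonneg : 0 ≤ ∑' k, neumannEigenvalue k * c k t ^ 2 :=
    tsum_nonneg fun k => mul_nonneg (neumannEigenvalue_nonneg k) (sq_nonneg _)
  set D := ∑' k, neumannEigenvalue k * c k t ^ 2
  have rate_mul_sq_le : dampingRate lam * x t ^ 2 ≤ lam / 4 * x t ^ 2 :=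
    mul_le_mul_of_nonneg_right (min_le_left _ _) (sq_nonneg _)
  have rate_mul_energy_le : dampingRate lam * D ≤ 1 / 7 * D :=
    mul_le_mul_of_nonneg_right (min_le_right _ _) energy_nonneg
  have := mul_le_mul_of_nonneg_left poincare (dampingRate_pos hlam).le
  linarith [H.damping_right t ht, H.damping_left t ht]

theorem tsum_sq_le (H : DampedNeumannModes T B M lam c x y g h) (hlam : 0 < lam)
    (hs : T < s) (hst : s ≤ t) :
    ∑' k, c k t ^ 2 ≤
      B ^ 2 * (∑' k, decayWeight k) * exp (-(2 * dampingRate lam) * (t - s)) :=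
  calc ∑' k, c k t ^ 2
      ≤ (∑' k, c k s ^ 2) * exp (-(2 * dampingRate lam) * (t - s)) :=
        le_mul_exp_of_hasDerivAt_le hst
          (fun _ hτ => H.hasDerivAt_tsum_sq (hs.trans_le hτ.1))
          (fun _ hτ => H.energy_deriv_le hlam (hs.trans_le hτ.1))
    _ ≤ B ^ 2 * (∑' k, decayWeight k) * exp (-(2 * dampingRate lam) * (t - s)) := by
        rw [← tsum_mul_left]
        gcongr ?_ * _
        exact (H.summable_sq hs).tsum_le_tsum (H.sq_coeff_le hs) (summable_decayWeight.mul_left _)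

theorem abs_coeff_le_exp (H : DampedNeumannModes T B M lam c x y g h) (hlam : 0 < lam)
    (hs : T < s) (hst : s ≤ t) (k : ℤ) :
    |c k t| ≤ B * √(∑' l, decayWeight l) * exp (-(dampingRate lam * (t - s))) := by
  have weight_nonneg : 0 ≤ ∑' l, decayWeight l := tsum_nonneg fun l => (decayWeight_pos l).le
  have hB := H.bound_nonneg
  refine abs_le_of_sq_le_sq ?_ (by positivity)
  calc c k t ^ 2 ≤ ∑' l, c l t ^ 2 :=
        (H.summable_sq (hs.trans_le hst)).le_tsum k fun _ _ => sq_nonneg _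
    _ ≤ B ^ 2 * (∑' l, decayWeight l) * exp (-(2 * dampingRate lam) * (t - s)) :=
        H.tsum_sq_le hlam hs hst
    _ = (B * √(∑' l, decayWeight l) * exp (-(dampingRate lam * (t - s)))) ^ 2 := by
        rw [mul_pow, mul_pow, sq_sqrt weight_nonneg, ← exp_nat_mul]
        push_cast
        ring_nf

-- The exponents `1/4` and `3/4` leave a summable power of the weights, as `2 * (3 / 4) > 1`.
theorem abs_le_exp_of_hasSum (H : DampedNeumannModes T B M lam c x y g h) (hlam : 0 < lam)
    (hs : T < s) (hst : s ≤ t) {a : ℤ → ℝ} (ha : ∀ k, |a k| ≤ 1) {u : ℝ}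
    (hu : HasSum (fun k => a k * c k t) u) :
    |u| ≤ dampingConst B * exp (-(dampingRate lam / 4 * (t - s))) := by
  have hB := H.bound_nonneg
  rw [← hu.tsum_eq, ← norm_eq_abs, dampingConst, mul_right_comm, ← tsum_mul_left]
  refine tsum_of_norm_bounded
    ((summable_decayWeight_rpow (p := 3 / 4) (by norm_num)).mul_left _).hasSum fun k => ?_
  rw [norm_eq_abs, abs_mul]
  calc |a k| * |c k t| ≤ |c k t| := mul_le_of_le_one_left (abs_nonneg _) (ha k)
    _ ≤ (B * √(∑' l, decayWeight l) * exp (-(dampingRate lam * (t - s)))) ^ (1 / 4 : ℝ) *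
        (B * decayWeight k) ^ (3 / 4 : ℝ) :=
      le_rpow_mul_rpow_of_le (abs_nonneg _) (H.abs_coeff_le_exp hlam hs hst k)
        (H.abs_coeff_le k t (hs.trans_le hst)) (by norm_num) (by norm_num) (by norm_num)
    _ = _ := by
      rw [mul_rpow (by positivity) (exp_pos _).le, mul_rpow hB (decayWeight_pos k).le, ← exp_mul]
      ring_nf

end DampedNeumannModes

/-! ### Duhamel's formula with boundary fluxes -/

/-- The Duhamel integral `∫₀ᵗ e^{-as} F (t - s) ds`, solving `u' = -a u + F` with `u 0 = 0`. -/
noncomputable def expConv (a : ℝ) (F : ℝ → ℝ) (t : ℝ) : ℝ :=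
  ∫ s in (0 : ℝ)..t, exp (-(a * s)) * F (t - s)

theorem expConv_eq (a : ℝ) (F : ℝ → ℝ) (t : ℝ) :
    expConv a F t = exp (-(a * t)) * ∫ s in (0 : ℝ)..t, exp (a * s) * F s := by
  have h := intervalIntegral.integral_comp_sub_left (a := 0) (b := t)
    (fun τ => exp (-(a * (t - τ))) * F τ) t
  simp only [sub_sub_cancel, sub_self, sub_zero] at h
  rw [expConv, h, ← intervalIntegral.integral_const_mul]
  refine intervalIntegral.integral_congr fun s _ => ?_
  rw [← mul_assoc, ← exp_add]
  ring_nf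

theorem locallyIntegrable_exp_mul {F : ℝ → ℝ} (hF : LocallyIntegrable F) (a : ℝ) :
    LocallyIntegrable fun s => exp (a * s) * F s := by
  rw [← locallyIntegrableOn_univ] at hF ⊢
  exact hF.continuousOn_mul (by fun_prop) isOpen_univ.isLocallyClosed

theorem continuous_expConv {F : ℝ → ℝ} (hF : LocallyIntegrable F) (a : ℝ) :
    Continuous (expConv a F) := by
  have primitive_continuous := intervalIntegral.continuous_primitive
    (fun x y => ((locallyIntegrable_exp_mul hF a).integrableOn_isCompact
      (isCompact_uIcc (a := x) (b := y))).intervalIntegrable) 0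
  rw [funext (expConv_eq a F)]
  fun_prop

theorem hasDerivAt_exp_neg_mul (a t : ℝ) :
    HasDerivAt (fun t => exp (-(a * t))) (-(a * exp (-(a * t)))) t :=
  ((hasDerivAt_id' t).const_mul a).neg.exp.congr_deriv (by simp [mul_comm])

theorem hasDerivAt_expConv {F : ℝ → ℝ} (hF : LocallyIntegrable F) (a : ℝ) {t : ℝ}
    (ht : ContinuousAt F t) : HasDerivAt (expConv a F) (-(a * expConv a F t) + F t) t := by
  have hint := locallyIntegrable_exp_mul hF a
  have primitive_deriv := intervalIntegral.integral_hasDerivAt_right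
    (hint.integrableOn_isCompact (isCompact_uIcc (a := 0) (b := t))).intervalIntegrable
    (hint.aestronglyMeasurable.stronglyMeasurableAtFilter (l := 𝓝 t))
    (by fun_prop)
  have exp_mul_exp : exp (-(a * t)) * exp (a * t) = 1 := by rw [← exp_add]; simp
  rw [expConv_eq, funext (expConv_eq a F)]
  refine ((hasDerivAt_exp_neg_mul a t).mul primitive_deriv).congr_deriv ?_
  linear_combination F t * exp_mul_exp

theorem abs_expConv_le {F : ℝ → ℝ} {M : ℝ} (hF : ∀ s, |F s| ≤ M) (a : ℝ) {t : ℝ} (ht : 0 ≤ t) :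
    |expConv a F t| ≤ M * ∫ s in (0 : ℝ)..t, exp (-(a * s)) := by
  rw [expConv, ← intervalIntegral.integral_const_mul, ← norm_eq_abs]
  refine intervalIntegral.norm_integral_le_of_norm_le ht (.of_forall fun s _ => ?_)
    (Continuous.intervalIntegrable (by fun_prop) _ _)
  rw [norm_mul, norm_of_nonneg (exp_pos _).le, mul_comm]
  exact mul_le_mul_of_nonneg_right (hF _) (exp_pos _).le

theorem integral_exp_neg_mul_le_inv {a : ℝ} (ha : 0 < a) (t : ℝ) :
    ∫ s in (0 : ℝ)..t, exp (-(a * s)) ≤ a⁻¹ := by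
  have antideriv (s : ℝ) : HasDerivAt (fun s => -(a⁻¹ * exp (-(a * s)))) (exp (-(a * s))) s :=
    ((hasDerivAt_exp_neg_mul a s).const_mul a⁻¹).neg.congr_deriv (by field_simp)
  rw [intervalIntegral.integral_eq_sub_of_hasDerivAt (fun s _ => antideriv s)
    (Continuous.intervalIntegrable (by fun_prop) _ _)]
  have : 0 < a⁻¹ * exp (-(a * t)) := by positivity
  simp only [mul_zero, neg_zero, exp_zero, mul_one]
  linarith

theorem integral_exp_neg_neumannEigenvalue_mul_le {k : ℤ} (hk : k ≠ 0) (t : ℝ) :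
    ∫ s in (0 : ℝ)..t, exp (-(neumannEigenvalue k * s)) ≤ 2 * decayWeight k :=
  (integral_exp_neg_mul_le_inv (one_pos.trans_le (one_le_neumannEigenvalue hk)) t).trans
    (inv_neumannEigenvalue_le hk)

theorem integral_exp_neg_neumannEigenvalue_mul_le_add {t : ℝ} (ht : 0 ≤ t) (k : ℤ) :
    ∫ s in (0 : ℝ)..t, exp (-(neumannEigenvalue k * s)) ≤ (2 + t) * decayWeight k := by
  rcases eq_or_ne k 0 with rfl | hk
  · simp [neumannEigenvalue_zero, decayWeight_zero]
  · refine (integral_exp_neg_neumannEigenvalue_mul_le hk t).trans ?_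
    have := decayWeight_pos k
    gcongr
    linarith

/-- The cosine coefficients at time `t` of the solution of `∂ₜu = ½ ∂²u` on `[-1, 1]` with initial
datum `ρ₀` and with heat entering at rate `f` at `1` and leaving at rate `g` at `-1`. -/
noncomputable def fluxMode (ρ₀ f g : ℝ → ℝ) (k : ℤ) (t : ℝ) : ℝ :=
  exp (-(neumannEigenvalue k * t)) * (∫ r in (-1 : ℝ)..1, neumannMode k r * ρ₀ r) +
    expConv (neumannEigenvalue k) (fun s => f s - neumannMode k (-1) * g s) t

section FluxMode

variable {ρ₀ f g : ℝ → ℝ} {M t : ℝ}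

theorem hasSum_integral_P_mul (hρ₀ : IntervalIntegrable ρ₀ volume (-1) 1) (ht : 0 < t) (r : ℝ) :
    HasSum (fun k => 1 / 2 * neumannMode k r * (exp (-(neumannEigenvalue k * t)) *
      ∫ r' in (-1 : ℝ)..1, neumannMode k r' * ρ₀ r'))
      (∫ r' in (-1 : ℝ)..1, P t r r' * ρ₀ r') := by
  have integral_sum := intervalIntegral.hasSum_integral_of_dominated_convergence (μ := volume)
    (a := -1) (b := 1) (f := fun r' => P t r r' * ρ₀ r')
    (F := fun k r' => 1 / 2 * neumannMode k r *
      (exp (-(neumannEigenvalue k * t)) * (neumannMode k r' * ρ₀ r')))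
    (fun k r' => exp (-(neumannEigenvalue k * t)) * |ρ₀ r'|) (fun k => ?_)
    (fun k => .of_forall fun r' _ => ?_)
    (.of_forall fun r' _ => (summable_exp_neg_neumannEigenvalue_mul ht).mul_right _)
    ?_
    (.of_forall fun r' _ => ((hasSum_P ht r r').mul_right _).congr_fun fun k => by ring)
  · refine integral_sum.congr_fun fun k => ?_
    simp only [intervalIntegral.integral_const_mul]
  · exact (((hρ₀.continuousOn_mul (continuous_neumannMode k).continuousOn).const_mul _).const_mul
      _).def'.aestronglyMeasurable
  · rw [norm_mul, norm_mul (exp _), norm_mul (neumannMode k r'), norm_of_nonneg (exp_pos _).le]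
    refine (mul_le_of_le_one_left (by positivity) (abs_half_mul_neumannMode_le_one k r)).trans ?_
    gcongr
    exact mul_le_of_le_one_left (norm_nonneg _) (abs_neumannMode_le_one k r')
  · simp only [tsum_mul_right]
    exact hρ₀.abs.const_mul _

theorem abs_sub_neumannMode_mul_le (hf : ∀ s, |f s| ≤ M) (hg : ∀ s, |g s| ≤ M) (k : ℤ) (s : ℝ) :
    |f s - neumannMode k (-1) * g s| ≤ 2 * M := by
  refine (abs_sub _ _).trans ?_
  rw [abs_mul, two_mul]
  exact add_le_add (hf s) ((mul_le_of_le_one_left (abs_nonneg _)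
    (abs_neumannMode_le_one k _)).trans (hg s))

theorem hasSum_integral_P_mul_flux (hf_meas : Measurable f) (hg_meas : Measurable g)
    (hf : ∀ s, |f s| ≤ M) (hg : ∀ s, |g s| ≤ M) (ht : 0 < t) (r : ℝ) :
    HasSum (fun k => 1 / 2 * neumannMode k r *
      expConv (neumannEigenvalue k) (fun s => f s - neumannMode k (-1) * g s) t)
      (∫ s in (0 : ℝ)..t, (P s r 1 * f (t - s) - P s r (-1) * g (t - s))) := by
  set F : ℤ → ℝ → ℝ := fun k s => 1 / 2 * neumannMode k r *
    (exp (-(neumannEigenvalue k * s)) * (f (t - s) - neumannMode k (-1) * g (t - s))) with hF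
  have norm_le (k : ℤ) (s : ℝ) : ‖F k s‖ ≤ 2 * M * exp (-(neumannEigenvalue k * s)) := by
    rw [hF, norm_mul, norm_mul (exp _), norm_of_nonneg (exp_pos _).le, mul_comm (2 * M)]
    refine (mul_le_of_le_one_left (by positivity) (abs_half_mul_neumannMode_le_one k r)).trans ?_
    gcongr
    exact abs_sub_neumannMode_mul_le hf hg k _
  have exp_integrable (k : ℤ) : IntegrableOn (fun s => 2 * M * exp (-(neumannEigenvalue k * s)))
      (Ioc 0 t) :=
    (Continuous.integrableOn_Icc (by fun_prop)).mono_set Ioc_subset_Icc_self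
  have F_integrable (k : ℤ) : Integrable (F k) (volume.restrict (Ioc 0 t)) :=
    (exp_integrable k).mono' (by fun_prop) (.of_forall (norm_le k))
  have norms_summable : Summable fun k => ∫ s in Ioc 0 t, ‖F k s‖ := by
    refine .of_nonneg_of_le (fun k => integral_nonneg fun s => norm_nonneg _) (fun k => ?_)
      ((summable_decayWeight.mul_left (2 + t)).mul_left (2 * M))
    refine (integral_mono (F_integrable k).norm (exp_integrable k) (norm_le k)).trans ?_
    rw [integral_const_mul, ← intervalIntegral.integral_of_le ht.le]
    exact mul_le_mul_of_nonneg_left (integral_exp_neg_neumannEigenvalue_mul_le_add ht.le k)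
      ((abs_nonneg _).trans (abs_sub_neumannMode_mul_le hf hg k 0))
  have pointwise : EqOn (fun s => P s r 1 * f (t - s) - P s r (-1) * g (t - s))
      (fun s => ∑' k, F k s) (Ioc 0 t) := fun s hs => by
    refine (((hasSum_P hs.1 r 1).mul_right (f (t - s))).sub
      ((hasSum_P hs.1 r (-1)).mul_right (g (t - s))) |>.congr_fun fun k => ?_).tsum_eq.symm
    rw [hF, neumannMode_one]
    ring
  rw [intervalIntegral.integral_of_le ht.le, setIntegral_congr_fun measurableSet_Ioc pointwise]
  refine (hasSum_integral_of_summable_integral_norm F_integrable norms_summable).congr_fun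
    fun k => ?_
  rw [← intervalIntegral.integral_of_le ht.le, intervalIntegral.integral_const_mul, expConv]

theorem hasSum_fluxMode (hρ₀ : IntervalIntegrable ρ₀ volume (-1) 1) (hf_meas : Measurable f)
    (hg_meas : Measurable g) (hf : ∀ s, |f s| ≤ M) (hg : ∀ s, |g s| ≤ M) (ht : 0 < t) (r : ℝ) :
    HasSum (fun k => 1 / 2 * neumannMode k r * fluxMode ρ₀ f g k t)
      ((∫ r' in (-1 : ℝ)..1, P t r r' * ρ₀ r') +
        ∫ s in (0 : ℝ)..t, (P s r 1 * f (t - s) - P s r (-1) * g (t - s))) :=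
  ((hasSum_integral_P_mul hρ₀ ht r).add
    (hasSum_integral_P_mul_flux hf_meas hg_meas hf hg ht r)).congr_fun fun k => by
      rw [fluxMode]; ring

theorem abs_integral_neumannMode_mul_le (hρ₀ : IntervalIntegrable ρ₀ volume (-1) 1) (k : ℤ) :
    |∫ r in (-1 : ℝ)..1, neumannMode k r * ρ₀ r| ≤ ∫ r in (-1 : ℝ)..1, |ρ₀ r| :=
  intervalIntegral.norm_integral_le_of_norm_le (f := fun r => neumannMode k r * ρ₀ r)
    (by norm_num) (.of_forall fun r _ => (abs_mul _ _).trans_le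
      (mul_le_of_le_one_left (abs_nonneg _) (abs_neumannMode_le_one k r))) hρ₀.abs

theorem abs_fluxMode_le (hρ₀ : IntervalIntegrable ρ₀ volume (-1) 1) (hf : ∀ s, |f s| ≤ M)
    (hg : ∀ s, |g s| ≤ M) {δ : ℝ} (hδ : 0 < δ) (ht : δ ≤ t) (k : ℤ) :
    |fluxMode ρ₀ f g k t| ≤ (1 + δ⁻¹) * decayWeight k * (∫ r in (-1 : ℝ)..1, |ρ₀ r|) +
      2 * M * ∫ s in (0 : ℝ)..t, exp (-(neumannEigenvalue k * s)) := by
  refine (abs_add_le _ _).trans (add_le_add ?_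
    (abs_expConv_le (abs_sub_neumannMode_mul_le hf hg k) _ (hδ.le.trans ht)))
  rw [abs_mul, abs_of_pos (exp_pos _)]
  have := decayWeight_pos k
  gcongr
  · exact exp_neg_neumannEigenvalue_mul_le k hδ ht
  · exact abs_integral_neumannMode_mul_le hρ₀ k

theorem locallyIntegrable_sub_neumannMode_mul (hf_meas : Measurable f) (hg_meas : Measurable g)
    (hf : ∀ s, |f s| ≤ M) (hg : ∀ s, |g s| ≤ M) (k : ℤ) :
    LocallyIntegrable fun s => f s - neumannMode k (-1) * g s :=
  (locallyIntegrable_const (2 * M)).mono (by fun_prop) (.of_forall fun s =>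
    (abs_sub_neumannMode_mul_le hf hg k s).trans (le_abs_self _))

theorem continuous_fluxMode (hf_meas : Measurable f) (hg_meas : Measurable g)
    (hf : ∀ s, |f s| ≤ M) (hg : ∀ s, |g s| ≤ M) (k : ℤ) : Continuous (fluxMode ρ₀ f g k) := by
  have := continuous_expConv (locallyIntegrable_sub_neumannMode_mul hf_meas hg_meas hf hg k)
    (neumannEigenvalue k)
  unfold fluxMode
  fun_prop

theorem hasDerivAt_fluxMode (hf_meas : Measurable f) (hg_meas : Measurable g)
    (hf : ∀ s, |f s| ≤ M) (hg : ∀ s, |g s| ≤ M) (hft : ContinuousAt f t)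
    (hgt : ContinuousAt g t) (k : ℤ) :
    HasDerivAt (fluxMode ρ₀ f g k) (-(neumannEigenvalue k * fluxMode ρ₀ f g k t) +
      (f t - neumannMode k (-1) * g t)) t := by
  have duhamel_deriv := hasDerivAt_expConv
    (locallyIntegrable_sub_neumannMode_mul hf_meas hg_meas hf hg k) (neumannEigenvalue k)
    (hft.sub (hgt.const_mul _))
  refine (((hasDerivAt_exp_neg_mul (neumannEigenvalue k) t).mul_const _).add
    duhamel_deriv).congr_deriv ?_
  rw [fluxMode]
  ring

theorem continuousAt_tsum_fluxMode (hρ₀ : IntervalIntegrable ρ₀ volume (-1) 1)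
    (hf_meas : Measurable f) (hg_meas : Measurable g) (hf : ∀ s, |f s| ≤ M)
    (hg : ∀ s, |g s| ≤ M) (ht : 0 < t) (r : ℝ) :
    ContinuousAt (fun t => ∑' k, 1 / 2 * neumannMode k r * fluxMode ρ₀ f g k t) t := by
  have : 0 ≤ ∫ r in (-1 : ℝ)..1, |ρ₀ r| :=
    intervalIntegral.integral_nonneg (by norm_num) fun _ _ => abs_nonneg _
  have hM : 0 ≤ M := (abs_nonneg _).trans (hf 0)
  refine (continuousOn_tsum (u := fun k => ((1 + (t / 2)⁻¹) * (∫ r in (-1 : ℝ)..1, |ρ₀ r|) +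
    2 * M * (2 + 2 * t)) * decayWeight k) (s := Icc (t / 2) (2 * t)) (fun k => ?_)
    (summable_decayWeight.mul_left _) fun k s hs => ?_).continuousAt
    (Icc_mem_nhds (by linarith) (by linarith))
  · have := continuous_fluxMode (ρ₀ := ρ₀) hf_meas hg_meas hf hg k
    fun_prop
  · have hs_nonneg : 0 ≤ s := by linarith [hs.1]
    have := decayWeight_pos k
    rw [norm_eq_abs, abs_mul]
    calc |1 / 2 * neumannMode k r| * |fluxMode ρ₀ f g k s|
        ≤ |fluxMode ρ₀ f g k s| :=
          mul_le_of_le_one_left (abs_nonneg _) (abs_half_mul_neumannMode_le_one k r)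
      _ ≤ (1 + (t / 2)⁻¹) * decayWeight k * (∫ r in (-1 : ℝ)..1, |ρ₀ r|) +
          2 * M * ((2 + s) * decayWeight k) := by
          refine (abs_fluxMode_le hρ₀ hf hg (by linarith) hs.1 k).trans ?_
          gcongr
          exact integral_exp_neg_neumannEigenvalue_mul_le_add hs_nonneg k
      _ ≤ (1 + (t / 2)⁻¹) * decayWeight k * (∫ r in (-1 : ℝ)..1, |ρ₀ r|) +
          2 * M * ((2 + 2 * t) * decayWeight k) := by
          gcongr
          exact hs.2
      _ = _ := by ring

end FluxMode

/-! ### Solutions of the macroscopic equation -/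

/-- The rate `j/2 (1 - uᴷ)` at which a reservoir exchanges mass across a boundary of density `u`. -/
noncomputable def reservoirRate (j : ℝ) (K : ℕ) (u : ℝ) : ℝ := j / 2 * (1 - u ^ K)

theorem continuous_reservoirRate (j : ℝ) (K : ℕ) : Continuous (reservoirRate j K) := by
  unfold reservoirRate
  fun_prop

theorem reservoirRate_mem_Icc {j u : ℝ} (hj : 0 ≤ j) (K : ℕ) (hu : u ∈ Icc (0 : ℝ) 1) :
    reservoirRate j K u ∈ Icc 0 (j / 2) := by
  have hpow : u ^ K ∈ Icc (0 : ℝ) 1 := ⟨pow_nonneg hu.1 K, pow_le_one₀ hu.1 hu.2⟩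
  rw [reservoirRate]
  exact ⟨mul_nonneg (by positivity) (sub_nonneg.mpr hpow.2),
    mul_le_of_le_one_right (by positivity) (sub_le_self 1 hpow.1)⟩

theorem abs_reservoirRate_sub_le {j u v : ℝ} (hj : 0 ≤ j) (K : ℕ) (hu : u ∈ Icc (0 : ℝ) 1)
    (hv : v ∈ Icc (0 : ℝ) 1) : |reservoirRate j K u - reservoirRate j K v| ≤ j / 2 := by
  simpa only [Real.dist_eq, sub_zero] using
    Real.dist_le_of_mem_Icc (reservoirRate_mem_Icc hj K hu) (reservoirRate_mem_Icc hj K hv)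

theorem mul_sq_le_reservoirRate_sub_mul {j a u : ℝ} {K : ℕ} (hj : 0 ≤ j) (hK : K ≠ 0)
    (ha : 0 ≤ a) (hu : 0 ≤ u) :
    j / 2 * a ^ (K - 1) * (u - a) ^ 2 ≤
      (reservoirRate j K a - reservoirRate j K u) * (u - a) := by
  have := mul_le_mul_of_nonneg_left (pow_pred_mul_sq_le hK hu ha) (by positivity : 0 ≤ j / 2)
  rw [reservoirRate, reservoirRate]
  linarith

/-- The rate of inflow at `1`. The density at negative times is unconstrained, so it is replaced by
the initial one. -/
noncomputable def rightFlux (j : ℝ) (K : ℕ) (ρ : ℝ → ℝ → ℝ) (t : ℝ) : ℝ :=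
  reservoirRate j K (ρ 1 (max t 0))

/-- The rate of outflow at `-1`, with the convention of `rightFlux` at negative times. -/
noncomputable def leftFlux (j : ℝ) (K : ℕ) (ρ : ℝ → ℝ → ℝ) (t : ℝ) : ℝ :=
  reservoirRate j K (1 - ρ (-1) (max t 0))

/-- The cosine coefficients of the difference between a solution of the macroscopic equation and
the stationary profile. -/
noncomputable def deviationMode (j : ℝ) (K : ℕ) (α : ℝ) (ρ₀ : ℝ → ℝ) (ρ : ℝ → ℝ → ℝ) (k : ℤ)
    (t : ℝ) : ℝ :=
  fluxMode ρ₀ (rightFlux j K ρ) (leftFlux j K ρ) k t - profileMode (j * (1 - α ^ K)) k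

/-- A bound, relative to `decayWeight`, on all deviation modes at times `t > 1`; here `β` is the
slope of the stationary profile. -/
noncomputable def deviationBound (j β : ℝ) : ℝ :=
  2 + (4 + 2 * j + 2 * |β|) * (1 + ∑' k, decayWeight k)

theorem deviationBound_nonneg {j : ℝ} (hj : 0 ≤ j) (β : ℝ) : 0 ≤ deviationBound j β := by
  have : 0 ≤ ∑' k, decayWeight k := tsum_nonneg fun k => (decayWeight_pos k).le
  rw [deviationBound]
  positivity

namespace IsMacroSolution

variable {j α r t : ℝ} {K : ℕ} {ρ₀ : ℝ → ℝ} {ρ : ℝ → ℝ → ℝ}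

theorem mem_Icc (H : IsMacroSolution j K ρ₀ ρ) (hr : r ∈ Icc (-1 : ℝ) 1) (ht : 0 ≤ t) :
    ρ r t ∈ Icc (0 : ℝ) 1 :=
  H.2.1 r hr t ht

theorem right_trace_mem_Icc (H : IsMacroSolution j K ρ₀ ρ) (ht : 0 ≤ t) : ρ 1 t ∈ Icc (0 : ℝ) 1 :=
  H.mem_Icc (by norm_num) ht

theorem one_sub_left_trace_mem_Icc (H : IsMacroSolution j K ρ₀ ρ) (ht : 0 ≤ t) :
    1 - ρ (-1) t ∈ Icc (0 : ℝ) 1 :=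
  Icc.mem_iff_one_sub_mem.mp (H.mem_Icc (by norm_num) ht)

theorem initial_mem_Icc (H : IsMacroSolution j K ρ₀ ρ) (hr : r ∈ Icc (-1 : ℝ) 1) :
    ρ₀ r ∈ Icc (0 : ℝ) 1 :=
  H.2.2.1 r hr ▸ H.mem_Icc hr le_rfl

theorem abs_initial_le_one (H : IsMacroSolution j K ρ₀ ρ) (hr : r ∈ uIoc (-1 : ℝ) 1) :
    |ρ₀ r| ≤ 1 := by
  rw [uIoc_of_le (by norm_num)] at hr
  have := H.initial_mem_Icc (Ioc_subset_Icc_self hr)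
  exact (abs_of_nonneg this.1).trans_le this.2

theorem intervalIntegrable_initial (H : IsMacroSolution j K ρ₀ ρ) :
    IntervalIntegrable ρ₀ volume (-1) 1 := by
  have section_measurable : Measurable fun r => ρ r 0 := H.1.comp measurable_prodMk_right
  have measurable_initial : AEStronglyMeasurable ρ₀ (volume.restrict (uIoc (-1) 1)) := by
    refine section_measurable.aestronglyMeasurable.congr ?_
    filter_upwards [ae_restrict_mem measurableSet_uIoc] with r hr
    rw [uIoc_of_le (by norm_num)] at hr
    exact H.2.2.1 r (Ioc_subset_Icc_self hr)
  refine (intervalIntegrable_const (c := (1 : ℝ))).mono_fun measurable_initial ?_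
  filter_upwards [ae_restrict_mem measurableSet_uIoc] with r hr
  simpa using H.abs_initial_le_one hr

theorem integral_abs_initial_le (H : IsMacroSolution j K ρ₀ ρ) :
    ∫ r in (-1 : ℝ)..1, |ρ₀ r| ≤ 2 := by
  have h := intervalIntegral.norm_integral_le_of_norm_le_const (f := fun r => |ρ₀ r|)
    (a := -1) (b := 1) (C := 1) fun r hr => by simpa using H.abs_initial_le_one hr
  norm_num at h
  exact (le_abs_self _).trans h

theorem measurable_comp_max (H : IsMacroSolution j K ρ₀ ρ) (r : ℝ) :
    Measurable fun t => ρ r (max t 0) :=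
  H.1.comp (measurable_const.prodMk (measurable_id.max measurable_const))

theorem measurable_rightFlux (H : IsMacroSolution j K ρ₀ ρ) : Measurable (rightFlux j K ρ) :=
  (continuous_reservoirRate j K).measurable.comp (H.measurable_comp_max 1)

theorem measurable_leftFlux (H : IsMacroSolution j K ρ₀ ρ) : Measurable (leftFlux j K ρ) :=
  (continuous_reservoirRate j K).measurable.comp ((H.measurable_comp_max (-1)).const_sub 1)

theorem abs_rightFlux_le (H : IsMacroSolution j K ρ₀ ρ) (hj : 0 ≤ j) (t : ℝ) :
    |rightFlux j K ρ t| ≤ j / 2 := by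
  have := reservoirRate_mem_Icc hj K (H.right_trace_mem_Icc (le_max_right t 0))
  exact (abs_of_nonneg this.1).trans_le this.2

theorem abs_leftFlux_le (H : IsMacroSolution j K ρ₀ ρ) (hj : 0 ≤ j) (t : ℝ) :
    |leftFlux j K ρ t| ≤ j / 2 := by
  have := reservoirRate_mem_Icc hj K (H.one_sub_left_trace_mem_Icc (le_max_right t 0))
  exact (abs_of_nonneg this.1).trans_le this.2

theorem eq_integral_flux (H : IsMacroSolution j K ρ₀ ρ) (hr : r ∈ Icc (-1 : ℝ) 1) (ht : 0 < t) :
    ρ r t = (∫ r' in (-1 : ℝ)..1, P t r r' * ρ₀ r') + ∫ s in (0 : ℝ)..t,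
      (P s r 1 * rightFlux j K ρ (t - s) - P s r (-1) * leftFlux j K ρ (t - s)) := by
  rw [H.2.2.2 t ht r hr, ← intervalIntegral.integral_const_mul]
  congr 1
  refine intervalIntegral.integral_congr fun s hs => ?_
  rw [uIcc_of_le ht.le] at hs
  rw [rightFlux, leftFlux, reservoirRate, reservoirRate, max_eq_left (sub_nonneg.mpr hs.2)]
  ring

theorem hasSum_fluxMode (H : IsMacroSolution j K ρ₀ ρ) (hj : 0 ≤ j) (hr : r ∈ Icc (-1 : ℝ) 1)
    (ht : 0 < t) :
    HasSum (fun k => 1 / 2 * neumannMode k r *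
      fluxMode ρ₀ (rightFlux j K ρ) (leftFlux j K ρ) k t) (ρ r t) := by
  rw [H.eq_integral_flux hr ht]
  exact _root_.hasSum_fluxMode H.intervalIntegrable_initial H.measurable_rightFlux
    H.measurable_leftFlux (H.abs_rightFlux_le hj) (H.abs_leftFlux_le hj) ht r

theorem continuousAt (H : IsMacroSolution j K ρ₀ ρ) (hj : 0 ≤ j) (hr : r ∈ Icc (-1 : ℝ) 1)
    (ht : 0 < t) : ContinuousAt (ρ r) t := by
  refine (continuousAt_tsum_fluxMode H.intervalIntegrable_initial H.measurable_rightFlux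
    H.measurable_leftFlux (H.abs_rightFlux_le hj) (H.abs_leftFlux_le hj) ht r).congr ?_
  filter_upwards [lt_mem_nhds ht] with s hs using (H.hasSum_fluxMode hj hr hs).tsum_eq

theorem continuousAt_comp_max (H : IsMacroSolution j K ρ₀ ρ) (hj : 0 ≤ j)
    (hr : r ∈ Icc (-1 : ℝ) 1) (ht : 0 < t) : ContinuousAt (fun t => ρ r (max t 0)) t :=
  (H.continuousAt hj hr ht).congr <| by
    filter_upwards [lt_mem_nhds ht] with s hs
    rw [max_eq_left hs.le]

theorem hasDerivAt_deviationMode (H : IsMacroSolution j K ρ₀ ρ) (hj : 0 ≤ j) (ht : 0 < t) (k : ℤ) :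
    HasDerivAt (deviationMode j K α ρ₀ ρ k)
      (-(neumannEigenvalue k * deviationMode j K α ρ₀ ρ k t) -
        (reservoirRate j K α - reservoirRate j K (ρ 1 t)) -
        neumannMode k (-1) * (reservoirRate j K (1 - ρ (-1) t) - reservoirRate j K α)) t := by
  have right_continuous : ContinuousAt (rightFlux j K ρ) t :=
    (continuous_reservoirRate j K).continuousAt.comp
      (H.continuousAt_comp_max hj (right_mem_Icc.mpr (by norm_num)) ht)
  have left_continuous : ContinuousAt (leftFlux j K ρ) t :=
    (continuous_reservoirRate j K).continuousAt.comp
      ((H.continuousAt_comp_max hj (left_mem_Icc.mpr (by norm_num)) ht).const_sub 1)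
  have flux_deriv := hasDerivAt_fluxMode (ρ₀ := ρ₀) H.measurable_rightFlux H.measurable_leftFlux
    (H.abs_rightFlux_le hj) (H.abs_leftFlux_le hj) right_continuous left_continuous k
  refine (flux_deriv.sub_const (profileMode (j * (1 - α ^ K)) k)).congr_deriv ?_
  have profile_balance := neumannEigenvalue_mul_profileMode (j * (1 - α ^ K)) k
  rw [deviationMode]
  simp only [rightFlux, leftFlux, max_eq_left ht.le, reservoirRate]
  linear_combination -profile_balance

theorem hasSum_deviationMode (H : IsMacroSolution j K ρ₀ ρ) (hj : 0 ≤ j)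
    (hr : r ∈ Icc (-1 : ℝ) 1) (ht : 0 < t) :
    HasSum (fun k => 1 / 2 * neumannMode k r * deviationMode j K α ρ₀ ρ k t)
      (ρ r t - (j * (1 - α ^ K) * r + 1 / 2)) :=
  ((H.hasSum_fluxMode hj hr ht).sub (hasSum_profileMode _ hr)).congr_fun fun k => by
    rw [deviationMode, mul_sub]

theorem hasSum_deviationMode_right (H : IsMacroSolution j K ρ₀ ρ) (hj : 0 ≤ j)
    (hα : α + j * α ^ K = j + 1 / 2) (ht : 0 < t) :
    HasSum (fun k => deviationMode j K α ρ₀ ρ k t) (2 * (ρ 1 t - α)) := by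
  have trace_eq : ρ 1 t - (j * (1 - α ^ K) * 1 + 1 / 2) = ρ 1 t - α := by linarith
  rw [← trace_eq]
  refine ((H.hasSum_deviationMode hj (right_mem_Icc.mpr (by norm_num)) ht).mul_left
    2).congr_fun fun k => ?_
  rw [neumannMode_one]
  ring

theorem hasSum_deviationMode_left (H : IsMacroSolution j K ρ₀ ρ) (hj : 0 ≤ j)
    (hα : α + j * α ^ K = j + 1 / 2) (ht : 0 < t) :
    HasSum (fun k => neumannMode k (-1) * deviationMode j K α ρ₀ ρ k t)
      (2 * (ρ (-1) t - (1 - α))) := by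
  have trace_eq : ρ (-1) t - (j * (1 - α ^ K) * -1 + 1 / 2) = ρ (-1) t - (1 - α) := by linarith
  rw [← trace_eq]
  refine ((H.hasSum_deviationMode hj (left_mem_Icc.mpr (by norm_num)) ht).mul_left
    2).congr_fun fun k => ?_
  ring

theorem abs_deviationMode_le_of_ne_zero (H : IsMacroSolution j K ρ₀ ρ) (hj : 0 ≤ j) (ht : 1 ≤ t)
    {k : ℤ} (hk : k ≠ 0) :
    |deviationMode j K α ρ₀ ρ k t| ≤
      (4 + 2 * j + 2 * |j * (1 - α ^ K)|) * decayWeight k := by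
  have := decayWeight_pos k
  have flux_le : |fluxMode ρ₀ (rightFlux j K ρ) (leftFlux j K ρ) k t| ≤
      (4 + 2 * j) * decayWeight k :=
    calc |fluxMode ρ₀ (rightFlux j K ρ) (leftFlux j K ρ) k t|
        ≤ (1 + 1⁻¹) * decayWeight k * (∫ r in (-1 : ℝ)..1, |ρ₀ r|) +
          2 * (j / 2) * ∫ s in (0 : ℝ)..t, exp (-(neumannEigenvalue k * s)) :=
          abs_fluxMode_le H.intervalIntegrable_initial (H.abs_rightFlux_le hj)
            (H.abs_leftFlux_le hj) one_pos ht k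
      _ ≤ (1 + 1⁻¹) * decayWeight k * 2 + 2 * (j / 2) * (2 * decayWeight k) := by
          gcongr
          · exact H.integral_abs_initial_le
          · exact integral_exp_neg_neumannEigenvalue_mul_le hk t
      _ = (4 + 2 * j) * decayWeight k := by ring
  rw [add_mul]
  exact (abs_sub _ _).trans (add_le_add flux_le (abs_profileMode_le _ hk))

theorem abs_deviationMode_le (H : IsMacroSolution j K ρ₀ ρ) (hj : 0 ≤ j)
    (hα : α ∈ Icc (0 : ℝ) 1) (hαeq : α + j * α ^ K = j + 1 / 2) (ht : 1 ≤ t) (k : ℤ) :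
    |deviationMode j K α ρ₀ ρ k t| ≤ deviationBound j (j * (1 - α ^ K)) * decayWeight k := by
  have ht_pos : 0 < t := by linarith
  refine (abs_le_mul_decayWeight_of_ne_zero (H.hasSum_deviationMode_right hj hαeq ht_pos)
    (by positivity) (fun k hk => H.abs_deviationMode_le_of_ne_zero hj ht hk) k).trans ?_
  have trace_le : |2 * (ρ 1 t - α)| ≤ 2 := by
    have := Real.dist_le_of_mem_Icc (H.right_trace_mem_Icc ht_pos.le) hα
    rw [Real.dist_eq] at this
    rw [abs_mul, abs_two]
    linarith
  have := decayWeight_pos k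
  rw [deviationBound]
  gcongr

theorem dampedNeumannModes (H : IsMacroSolution j K ρ₀ ρ) (hj : 0 ≤ j) (hK : K ≠ 0)
    (hα : α ∈ Icc (0 : ℝ) 1) (hαeq : α + j * α ^ K = j + 1 / 2) :
    DampedNeumannModes 1 (deviationBound j (j * (1 - α ^ K))) (j / 2) (j / 2 * α ^ (K - 1))
      (deviationMode j K α ρ₀ ρ) (fun t => ρ 1 t - α) (fun t => ρ (-1) t - (1 - α))
      (fun t => reservoirRate j K α - reservoirRate j K (ρ 1 t))
      (fun t => reservoirRate j K (1 - ρ (-1) t) - reservoirRate j K α) where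
  hasSum_right _ ht := H.hasSum_deviationMode_right hj hαeq (one_pos.trans ht)
  hasSum_left _ ht := H.hasSum_deviationMode_left hj hαeq (one_pos.trans ht)
  hasDerivAt k _ ht := H.hasDerivAt_deviationMode hj (one_pos.trans ht) k
  abs_coeff_le k _ ht := H.abs_deviationMode_le hj hα hαeq ht.le k
  abs_right_le _ ht :=
    abs_reservoirRate_sub_le hj K hα (H.right_trace_mem_Icc (one_pos.trans ht).le)
  abs_left_le _ ht :=
    abs_reservoirRate_sub_le hj K (H.one_sub_left_trace_mem_Icc (one_pos.trans ht).le) hα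
  damping_right _ ht :=
    mul_sq_le_reservoirRate_sub_mul hj hK hα.1 (H.right_trace_mem_Icc (one_pos.trans ht).le).1
  damping_left t ht := by
    have dissipation := mul_sq_le_reservoirRate_sub_mul hj hK hα.1
      (H.one_sub_left_trace_mem_Icc (one_pos.trans ht).le).1
    have : 0 ≤ j / 2 * α ^ (K - 1) * (1 - ρ (-1) t - α) ^ 2 := by
      have := hα.1
      positivity
    linarith

theorem abs_sub_profile_le_one (H : IsMacroSolution j K ρ₀ ρ) (hα : α ∈ Icc (1 / 2 : ℝ) 1)
    (hαeq : α + j * α ^ K = j + 1 / 2) (hr : r ∈ Icc (-1 : ℝ) 1) (ht : 0 ≤ t) :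
    |ρ r t - (j * (1 - α ^ K) * r + 1 / 2)| ≤ 1 := by
  have slope_eq : j * (1 - α ^ K) = α - 1 / 2 := by linarith
  have profile_mem : (α - 1 / 2) * r + 1 / 2 ∈ Icc (0 : ℝ) 1 := by
    constructor <;> nlinarith [hα.1, hα.2, hr.1, hr.2]
  rw [slope_eq]
  simpa only [Real.dist_eq, sub_zero] using
    Real.dist_le_of_mem_Icc (H.mem_Icc hr ht) profile_mem

theorem abs_sub_profile_le (H : IsMacroSolution j K ρ₀ ρ) (hj : 0 < j) (hK : K ≠ 0)
    (hα : α ∈ Icc (1 / 2 : ℝ) 1) (hαeq : α + j * α ^ K = j + 1 / 2)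
    (hr : r ∈ Icc (-1 : ℝ) 1) (ht : 0 < t) :
    |ρ r t - (j * (1 - α ^ K) * r + 1 / 2)| ≤
      (dampingConst (deviationBound j (j * (1 - α ^ K))) + 1) *
        exp (-(dampingRate (j / 2 * α ^ (K - 1)) / 4 * (t - 2))) := by
  have hα_pos : 0 < α := by linarith [hα.1]
  have rate_pos : 0 < dampingRate (j / 2 * α ^ (K - 1)) := dampingRate_pos (by positivity)
  have const_nonneg := dampingConst_nonneg (deviationBound_nonneg hj.le (j * (1 - α ^ K)))
  rcases le_total 2 t with h2t | ht2
  · refine ((H.dampedNeumannModes hj.le hK ⟨hα_pos.le, hα.2⟩ hαeq).abs_le_exp_of_hasSum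
      (by positivity) one_lt_two h2t (fun k => abs_half_mul_neumannMode_le_one k r)
      (H.hasSum_deviationMode hj.le hr ht)).trans ?_
    gcongr
    linarith
  · refine (H.abs_sub_profile_le_one hα hαeq hr ht.le).trans
      (one_le_mul_of_one_le_of_one_le (by linarith) (one_le_exp ?_))
    nlinarith

end IsMacroSolution

theorem macro_exponential_convergence_general (j : ℝ) (hj : 0 < j) (K : ℕ) (hK : 1 ≤ K)
    (α : ℝ) (hα : α ∈ Set.Ioo (1 / 2 : ℝ) 1) (hαeq : α + j * α ^ K = j + 1 / 2) :
    ∃ c : ℝ, 0 < c ∧ ∃ c' : ℝ, 0 < c' ∧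
      ∀ (ρ₀ : ℝ → ℝ) (ρ : ℝ → ℝ → ℝ), IsMacroSolution j K ρ₀ ρ →
        ∀ t : ℝ, 0 < t → ∀ r ∈ Set.Icc (-1 : ℝ) 1,
          |ρ r t - (j * (1 - α ^ K) * r + 1 / 2)| ≤ c' * Real.exp (-c * t) := by
  have hα_pos : 0 < α := by linarith [hα.1]
  set C := dampingConst (deviationBound j (j * (1 - α ^ K)))
  set γ := dampingRate (j / 2 * α ^ (K - 1))
  have hC : 0 ≤ C := dampingConst_nonneg (deviationBound_nonneg hj.le _)
  have hγ : 0 < γ := dampingRate_pos (by positivity)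
  refine ⟨γ / 4, by positivity, (C + 1) * exp (γ / 4 * 2), by positivity,
    fun ρ₀ ρ H t ht r hr => ?_⟩
  rw [mul_assoc (C + 1), ← exp_add]
  convert H.abs_sub_profile_le hj (Nat.one_le_iff_ne_zero.mp hK) (Ioo_subset_Icc_self hα) hαeq
    hr ht using 3
  ring

/-- Exponential convergence to the stationary profile: with
`ρ*(r) = j·(1−α^K)·r + 1/2`, `α ∈ (1/2,1)` the unique solution of
`α + j·α^K = j + 1/2`, there exist `c, c' > 0` such that for every bounded
measurable initial datum `ρ₀ : [−1,1] → [0,1]` and every solution `ρ` of the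
macroscopic integral equation with initial datum `ρ₀` having continuous boundary
traces, `sup_{r∈[−1,1]} |ρ(r,t) − ρ*(r)| ≤ c'·e^{−c·t}` for all `t > 0`. -/
theorem macro_exponential_convergence (j : ℝ) (hj : 0 < j) (K : ℕ) (hK : 1 ≤ K)
    (α : ℝ) (hα : α ∈ Set.Ioo (1 / 2 : ℝ) 1) (hαeq : α + j * α ^ K = j + 1 / 2) :
    ∃ c : ℝ, 0 < c ∧ ∃ c' : ℝ, 0 < c' ∧
      ∀ (ρ₀ : ℝ → ℝ) (ρ : ℝ → ℝ → ℝ),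
        Measurable ρ₀ →
        (∀ r ∈ Set.Icc (-1 : ℝ) 1, ρ₀ r ∈ Set.Icc (0 : ℝ) 1) →
        IsMacroSolution j K ρ₀ ρ →
        ContinuousOn (fun t => ρ 1 t) (Set.Ici (0 : ℝ)) →
        ContinuousOn (fun t => ρ (-1) t) (Set.Ici (0 : ℝ)) →
        ∀ t : ℝ, 0 < t → ∀ r ∈ Set.Icc (-1 : ℝ) 1,
          |ρ r t - (j * (1 - α ^ K) * r + 1 / 2)| ≤ c' * Real.exp (-c * t) := by
  obtain ⟨c, hc, c', hc', h⟩ := macro_exponential_convergence_general j hj K hK α hα hαeq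
  exact ⟨c, hc, c', hc', fun ρ₀ ρ _ _ H _ _ => h ρ₀ ρ H⟩
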